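/- Let N ≥ 2, p ∈ (1,∞) and 0 < R < R₁. Then there exist nonempty disjoint open sets Ω₁, Ω₂ ⊆ B_{R₁}(0) such that λ₁(p, Ω₁) < λ₁(p, B_R(0)) and λ₁(p, Ω₂) < λ₁(p, B_{R₁}(0) \ closure(B_R(0))). -/

import Mathlib

open MeasureTheory Metric Set Filter
open scoped RealInnerProductSpace ENNReal Topology

/-- The first Dirichlet eigenvalue of the p-Laplacian on `Ω`, defined variationally as the
infimum of Rayleigh quotients of smooth, not identically zero functions with compact
support contained in `Ω`. -/
noncomputable def lam1 {N : ℕ} (p : ℝ) (Ω : Set (EuclideanSpace ℝ (Fin N))) : ℝ :=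
  sInf { r : ℝ | ∃ u : EuclideanSpace ℝ (Fin N) → ℝ,
    ContDiff ℝ (⊤ : ℕ∞) u ∧ u ≠ 0 ∧ HasCompactSupport u ∧ tsupport u ⊆ Ω ∧
    r = (∫ x in Ω, ‖gradient u x‖ ^ p) / (∫ x in Ω, |u x| ^ p) }

/-- The first standard basis vector `e₁` of `ℝ^N`. -/
noncomputable def e1 (N : ℕ) : EuclideanSpace ℝ (Fin N) :=
  (WithLp.equiv 2 (Fin N → ℝ)).symm (fun i => if (i : ℕ) = 0 then 1 else 0)

/-- The eccentric annulus `Ω_s = B_{R₁}(0) \ closure (B_{R₀}(s e₁))`. -/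
noncomputable def Om (N : ℕ) (R₀ R₁ s : ℝ) : Set (EuclideanSpace ℝ (Fin N)) :=
  ball 0 R₁ \ closure (ball (s • e1 N) R₀)

/-- `u` is a first eigenfunction of the p-Laplacian on `Ω` with eigenvalue `lam`:
C¹ on an open set containing the closure of `Ω`, positive in `Ω`, zero on `∂Ω`, and a weak
solution of `−Δ_p u = lam · u^{p−1}`. -/
def IsFirstEigenfunction {N : ℕ} (p : ℝ) (Ω : Set (EuclideanSpace ℝ (Fin N)))
    (lam : ℝ) (u : EuclideanSpace ℝ (Fin N) → ℝ) : Prop :=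
  (∃ V : Set (EuclideanSpace ℝ (Fin N)), IsOpen V ∧ closure Ω ⊆ V ∧ ContDiffOn ℝ 1 u V) ∧
  (∀ x ∈ Ω, 0 < u x) ∧
  (∀ x ∈ frontier Ω, u x = 0) ∧
  (∀ φ : EuclideanSpace ℝ (Fin N) → ℝ, ContDiff ℝ (⊤ : ℕ∞) φ → HasCompactSupport φ →
    tsupport φ ⊆ Ω →
    ∫ x in Ω, ‖gradient u x‖ ^ (p - 2) * ⟪gradient u x, gradient φ x⟫ =
      lam * ∫ x in Ω, (u x) ^ (p - 1) * φ x)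

/-!
A ball and an eccentric annulus around it do the job. Integrating in polar coordinates, a test
function on the concentric annulus has, along some ray, a radial profile `f` with no larger Rayleigh
quotient. Cut `f ‖x‖` along the sphere `‖x‖ = t` on which `|f|` is maximal, translate the inner part
by `c`, and glue the two parts by taking their minimum. As `deriv f t = 0`, the energy does not
grow, whereas the `p`-mass grows where both parts lie below the maximum, in particular where the
translated inner boundary comes close to the outer sphere. Hölder's inequality gives profiles of
bounded energy a common modulus of continuity, so this gain is uniform over minimizing profiles and
the eccentric eigenvalue is strictly smaller. The competitor has compact support, which leaves room
to enlarge the hole slightly; by scaling, the enlarged hole, a ball of radius greater than `R`, has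
smaller eigenvalue than `ball 0 R`.
-/

/-! ### Energy, mass and test functions -/

section LpMass

variable {X : Type*} [MeasurableSpace X] {μ : Measure X} {p : ℝ} {u : X → ℝ}

/-- The `p`-mass `∫ |u| ^ p`, the denominator of the Rayleigh quotient. -/
noncomputable def lpMass (p : ℝ) (μ : Measure X) (u : X → ℝ) : ℝ :=
  ∫ x, |u x| ^ p ∂μ

lemma lpMass_nonneg : 0 ≤ lpMass p μ u :=
  integral_nonneg fun _ => by positivity

variable [TopologicalSpace X] [OpensMeasurableSpace X] [IsFiniteMeasureOnCompacts μ]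

lemma integrable_norm_rpow_of_hasCompactSupport {F : Type*} [NormedAddCommGroup F] {g : X → F}
    (hp : 0 < p) (hg : Continuous g) (hc : HasCompactSupport g) :
    Integrable (fun x => ‖g x‖ ^ p) μ :=
  (hg.norm.rpow_const fun _ => Or.inr hp.le).integrable_of_hasCompactSupport
    (hc.comp_left (g := fun y => ‖y‖ ^ p) (by simp [Real.zero_rpow hp.ne']))

lemma lpMass_pos [μ.IsOpenPosMeasure] (hp : 0 < p) (hu : Continuous u) (hc : HasCompactSupport u)
    (h0 : u ≠ 0) : 0 < lpMass p μ u := by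
  obtain ⟨x, hx⟩ := Function.ne_iff.1 h0
  have hx' : 0 < |u x| := abs_pos.2 hx
  exact (hu.abs.rpow_const fun _ => Or.inr hp.le).integral_pos_of_hasCompactSupport_nonneg_nonzero
    (hc.comp_left (g := fun y => |y| ^ p) (by simp [Real.zero_rpow hp.ne']))
    (fun _ => by positivity) (x := x) (by positivity)

end LpMass

section Energy

variable {E : Type*} [NormedAddCommGroup E] [NormedSpace ℝ E]

/-- The `p`-Dirichlet energy `∫ |∇u| ^ p`, the gradient being measured by the operator norm of the
Fréchet derivative so that the notion makes sense in every normed space. -/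
noncomputable def dirichletEnergy [MeasurableSpace E] (p : ℝ) (μ : Measure E) (u : E → ℝ) : ℝ :=
  ∫ x, ‖fderiv ℝ u x‖ ^ p ∂μ

lemma dirichletEnergy_nonneg [MeasurableSpace E] {μ : Measure E} {p : ℝ} {u : E → ℝ} :
    0 ≤ dirichletEnergy p μ u :=
  integral_nonneg fun _ => by positivity

/-- Smooth functions with compact support in `Ω`, the admissible functions of the Rayleigh quotient.
The zero function is allowed, so that nonvanishing need not be tracked. -/
structure IsTestFunction (Ω : Set E) (u : E → ℝ) : Prop where
  contDiff : ContDiff ℝ (⊤ : ℕ∞) u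
  hasCompactSupport : HasCompactSupport u
  tsupport_subset : tsupport u ⊆ Ω

lemma IsTestFunction.comp_homeomorph {Ω : Set E} {u : E → ℝ} (hu : IsTestFunction Ω u) (e : E ≃ₜ E)
    (he : ContDiff ℝ (⊤ : ℕ∞) e) : IsTestFunction (e ⁻¹' Ω) (u ∘ e) where
  contDiff := hu.contDiff.comp he
  hasCompactSupport := hu.hasCompactSupport.comp_homeomorph e
  tsupport_subset := (tsupport_comp_subset_preimage u e.continuous).trans
    (preimage_mono hu.tsupport_subset)

end Energy

section Eigenvalue

variable {N : ℕ} {p r : ℝ} {Ω : Set (EuclideanSpace ℝ (Fin N))} {u : EuclideanSpace ℝ (Fin N) → ℝ}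

lemma setIntegral_norm_gradient_rpow (hp : 0 < p) (hu : tsupport u ⊆ Ω) :
    ∫ x in Ω, ‖gradient u x‖ ^ p = dirichletEnergy p volume u := by
  rw [setIntegral_eq_integral_of_forall_compl_eq_zero fun x hx => ?_]
  · simp only [gradient, LinearIsometryEquiv.norm_map, dirichletEnergy]
  · simp [gradient, fderiv_of_notMem_tsupport ℝ fun h => hx (hu h), Real.zero_rpow hp.ne']

lemma setIntegral_abs_rpow (hp : 0 < p) (hu : tsupport u ⊆ Ω) :
    ∫ x in Ω, |u x| ^ p = lpMass p volume u := by
  rw [setIntegral_eq_integral_of_forall_compl_eq_zero fun x hx => ?_, lpMass]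
  simp [image_eq_zero_of_notMem_tsupport fun h => hx (hu h), Real.zero_rpow hp.ne']

lemma IsTestFunction.lam1_mul_lpMass_le (hp : 0 < p) (hu : IsTestFunction Ω u) :
    lam1 p Ω * lpMass p volume u ≤ dirichletEnergy p volume u := by
  rcases eq_or_ne u 0 with rfl | h0
  · simpa [lpMass, Real.zero_rpow hp.ne'] using dirichletEnergy_nonneg
  · rw [← le_div_iff₀ (lpMass_pos hp hu.contDiff.continuous hu.hasCompactSupport h0)]
    refine csInf_le ⟨0, by rintro _ ⟨w, -, -, -, -, rfl⟩; positivity⟩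
      ⟨u, hu.contDiff, h0, hu.hasCompactSupport, hu.tsupport_subset, ?_⟩
    rw [setIntegral_norm_gradient_rpow hp hu.tsupport_subset,
      setIntegral_abs_rpow hp hu.tsupport_subset]

lemma exists_isTestFunction_of_lam1_lt (hp : 0 < p) (hΩ : IsOpen Ω) (hne : Ω.Nonempty)
    (h : lam1 p Ω < r) :
    ∃ u, IsTestFunction Ω u ∧ dirichletEnergy p volume u < r * lpMass p volume u := by
  obtain ⟨x, hx⟩ := hne
  obtain ⟨w, hwΩ, hwc, hw, -, hwx⟩ :=
    exists_contDiff_tsupport_subset (n := (⊤ : ℕ∞)) (hΩ.mem_nhds hx)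
  have hw0 : w ≠ 0 := fun h0 => by simp [h0] at hwx
  obtain ⟨_, ⟨u, hu, h0, huc, huΩ, rfl⟩, hlt⟩ :=
    exists_lt_of_csInf_lt (by exact ⟨_, w, hw, hw0, hwc, hwΩ, rfl⟩) h
  rw [setIntegral_norm_gradient_rpow hp huΩ, setIntegral_abs_rpow hp huΩ,
    div_lt_iff₀ (lpMass_pos hp hu.continuous huc h0)] at hlt
  exact ⟨u, ⟨hu, huc, huΩ⟩, hlt⟩

lemma le_lam1 (hp : 0 < p) (hΩ : IsOpen Ω) (hne : Ω.Nonempty)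
    (h : ∀ u, IsTestFunction Ω u → r * lpMass p volume u ≤ dirichletEnergy p volume u) :
    r ≤ lam1 p Ω := by
  by_contra! hr
  obtain ⟨u, hu, hlt⟩ := exists_isTestFunction_of_lam1_lt hp hΩ hne hr
  exact (h u hu).not_gt hlt

lemma lam1_anti {Ω' : Set (EuclideanSpace ℝ (Fin N))} (hp : 0 < p) (hΩ : IsOpen Ω)
    (hne : Ω.Nonempty) (hsub : Ω ⊆ Ω') : lam1 p Ω' ≤ lam1 p Ω :=
  le_lam1 hp hΩ hne fun _ hu => IsTestFunction.lam1_mul_lpMass_le hp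
    ⟨hu.contDiff, hu.hasCompactSupport, hu.tsupport_subset.trans hsub⟩

lemma lam1_lt_of_dirichletEnergy_lt
    (hu : lam1 p Ω * lpMass p volume u ≤ dirichletEnergy p volume u)
    (h : dirichletEnergy p volume u < r * lpMass p volume u) : lam1 p Ω < r :=
  lt_of_mul_lt_mul_right (hu.trans_lt h) lpMass_nonneg

end Eigenvalue

/-! ### Lipschitz competitors -/

section Mollification

open ContinuousLinearMap
open scoped Convolution

lemma tendsto_integral_norm_rpow {X F : Type*} [MeasurableSpace X] {μ : Measure X}
    [NormedAddCommGroup F] {f : ℕ → X → F} {g : X → F} {K : Set X} {C p : ℝ} (hp : 0 < p)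
    (hK : MeasurableSet K) (hμK : μ K ≠ ∞) (hf : ∀ n, AEStronglyMeasurable (f n) μ)
    (hC : ∀ n x, ‖f n x‖ ≤ C) (hfK : ∀ n, ∀ x ∉ K, f n x = 0)
    (hlim : ∀ᵐ x ∂μ, Tendsto (fun n => f n x) atTop (𝓝 (g x))) :
    Tendsto (fun n => ∫ x, ‖f n x‖ ^ p ∂μ) atTop (𝓝 (∫ x, ‖g x‖ ^ p ∂μ)) := by
  refine tendsto_integral_of_dominated_convergence (K.indicator fun _ => C ^ p)
    (fun n => ((hf n).norm.aemeasurable.pow_const p).aestronglyMeasurable)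
    ((integrable_indicator_iff hK).2 (integrableOn_const hμK))
    (fun n => Eventually.of_forall fun x => ?_)
    (hlim.mono fun x hx => hx.norm.rpow_const (Or.inr hp.le))
  by_cases hx : x ∈ K
  · rw [indicator_of_mem hx, Real.norm_of_nonneg (by positivity)]
    exact Real.rpow_le_rpow (norm_nonneg _) (hC n x) hp.le
  · simp [hx, hfK n x hx, Real.zero_rpow hp.ne']

lemma exists_contDiffBump_seq {E : Type*} [NormedAddCommGroup E] {δ : ℝ} (hδ : 0 < δ) :
    ∃ φ : ℕ → ContDiffBump (0 : E), (∀ n, (φ n).rOut ≤ δ) ∧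
      (∀ n, (φ n).rOut ≤ 2 * (φ n).rIn) ∧ Tendsto (fun n => (φ n).rOut) atTop (𝓝 0) := by
  refine ⟨fun n => ⟨δ / (n + 1) / 2, δ / (n + 1), by positivity, half_lt_self (by positivity)⟩,
    fun n => div_le_self hδ.le (by simp), fun n => (mul_div_cancel₀ _ two_ne_zero).ge, ?_⟩
  simpa [div_eq_mul_one_div δ] using tendsto_one_div_add_atTop_nhds_zero_nat.const_mul δ

variable {E : Type*} [NormedAddCommGroup E] [NormedSpace ℝ E] [FiniteDimensional ℝ E]
  [MeasurableSpace E] [BorelSpace E] {μ : Measure E} [μ.IsAddHaarMeasure]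

lemma hasFDerivAt_convolution_of_lipschitzWith {ρ v : E → ℝ} {C : NNReal} (hρ : Continuous ρ)
    (hρc : HasCompactSupport ρ) (hv : LipschitzWith C v) (x : E) :
    HasFDerivAt (ρ ⋆[lsmul ℝ ℝ, μ] v) ((ρ ⋆[lsmul ℝ ℝ, μ] fderiv ℝ v) x) x := by
  have hvc := hv.continuous
  have hdiff : ∀ᵐ t ∂μ, DifferentiableAt ℝ v (x - t) :=
    (quasiMeasurePreserving_sub_left μ x).ae hv.ae_differentiableAt
  have hmeas : Measurable fun t => fderiv ℝ v (x - t) :=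
    (measurable_fderiv ℝ v).comp (measurable_const.sub measurable_id)
  refine (hasFDerivAt_integral_of_dominated_loc_of_lip (F := fun y t => ρ t • v (y - t))
    (F' := fun t => ρ t • fderiv ℝ v (x - t)) (bound := fun t => ‖ρ t‖ * C) univ_mem
    (Eventually.of_forall fun y => by fun_prop) ?_ (hρ.measurable.smul hmeas).aestronglyMeasurable
    (Eventually.of_forall fun t => LipschitzWith.lipschitzOnWith (.of_dist_le_mul fun y z => ?_))
    ((hρ.integrable_of_hasCompactSupport hρc).norm.mul_const _) ?_).2
  · exact (by fun_prop : Continuous fun t => ρ t • v (x - t)).integrable_of_hasCompactSupport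
      hρc.smul_right
  · have hyz := hv.dist_le_mul (y - t) (z - t)
    rw [dist_sub_right] at hyz
    rw [dist_smul₀, Real.coe_nnabs, abs_of_nonneg (by positivity), mul_assoc]
    gcongr
  · filter_upwards [hdiff] with t ht
    exact ((hasFDerivAt_comp_sub t).2 ht.hasFDerivAt).const_smul (ρ t)

lemma norm_normed_convolution_le {F : Type*} [NormedAddCommGroup F] [NormedSpace ℝ F]
    [CompleteSpace F] (φ : ContDiffBump (0 : E)) {g : E → F} {C : ℝ}
    (hg : AEStronglyMeasurable g μ) (hC : ∀ x, ‖g x‖ ≤ C) (x : E) :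
    ‖(φ.normed μ ⋆[lsmul ℝ ℝ, μ] g) x‖ ≤ C := by
  rw [← dist_zero_right]
  exact dist_convolution_le ((norm_nonneg _).trans (hC x)) φ.support_normed_eq.subset
    φ.nonneg_normed φ.integral_normed hg fun y _ => (dist_zero_right _).trans_le (hC y)

lemma tsupport_normed_convolution_subset (φ : ContDiffBump (0 : E)) (v : E → ℝ) :
    tsupport (φ.normed μ ⋆[lsmul ℝ ℝ, μ] v) ⊆ cthickening φ.rOut (tsupport v) := by
  refine closure_minimal (fun x hx => ?_) isClosed_cthickening
  obtain ⟨a, ha, b, hb, rfl⟩ := support_convolution_subset (lsmul ℝ ℝ) hx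
  rw [φ.support_normed_eq, mem_ball_zero_iff] at ha
  exact mem_cthickening_of_dist_le _ b _ _ (subset_tsupport _ hb) (by simpa using ha.le)

lemma exists_isTestFunction_tendsto {p : ℝ} {Ω : Set E} {v : E → ℝ} {C : NNReal} (hp : 0 < p)
    (hΩ : IsOpen Ω) (hv : LipschitzWith C v) (hc : HasCompactSupport v) (hvΩ : tsupport v ⊆ Ω) :
    ∃ w : ℕ → E → ℝ, (∀ n, IsTestFunction Ω (w n)) ∧
      Tendsto (fun n => lpMass p μ (w n)) atTop (𝓝 (lpMass p μ v)) ∧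
      Tendsto (fun n => dirichletEnergy p μ (w n)) atTop (𝓝 (dirichletEnergy p μ v)) := by
  obtain ⟨δ, hδ, hδΩ⟩ := hc.isCompact.exists_cthickening_subset_open hΩ hvΩ
  obtain ⟨φ, hφδ, hφ2, hφ0⟩ := exists_contDiffBump_seq (E := E) hδ
  set w : ℕ → E → ℝ := fun n => (φ n).normed μ ⋆[lsmul ℝ ℝ, μ] v
  have hK : IsCompact (cthickening δ (tsupport v)) := hc.isCompact.cthickening
  have hwK n : tsupport (w n) ⊆ cthickening δ (tsupport v) :=
    (tsupport_normed_convolution_subset _ v).trans (cthickening_mono (hφδ n) _)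
  have hw n : IsTestFunction Ω (w n) :=
    ⟨(φ n).hasCompactSupport_normed.contDiff_convolution_left _ (φ n).contDiff_normed
      hv.continuous.locallyIntegrable, hK.of_isClosed_subset isClosed_closure (hwK n),
      (hwK n).trans hδΩ⟩
  have hfderiv n : fderiv ℝ (w n) = (φ n).normed μ ⋆[lsmul ℝ ℝ, μ] fderiv ℝ v :=
    funext fun x => (hasFDerivAt_convolution_of_lipschitzWith (φ n).continuous_normed
      (φ n).hasCompactSupport_normed hv x).fderiv
  have hmeas : Measurable (fderiv ℝ v) := measurable_fderiv ℝ v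
  have hbound x : ‖fderiv ℝ v x‖ ≤ C := norm_fderiv_le_of_lipschitz ℝ hv
  have hint : LocallyIntegrable (fderiv ℝ v) μ := fun x =>
    ⟨ball x 1, ball_mem_nhds x one_pos, Measure.integrableOn_of_bounded measure_ball_lt_top.ne
      hmeas.aestronglyMeasurable (Eventually.of_forall hbound)⟩
  obtain ⟨M, hM⟩ := hc.exists_bound_of_continuous hv.continuous
  refine ⟨w, hw, ?_, ?_⟩
  · exact tendsto_integral_norm_rpow hp isClosed_cthickening.measurableSet hK.measure_lt_top.ne
      (fun n => (hw n).contDiff.continuous.aestronglyMeasurable)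
      (fun n => norm_normed_convolution_le (φ n) hv.continuous.aestronglyMeasurable hM)
      (fun n x hx => image_eq_zero_of_notMem_tsupport fun h => hx (hwK n h))
      (Eventually.of_forall
        (ContDiffBump.convolution_tendsto_right_of_continuous hφ0 hv.continuous))
  · refine tendsto_integral_norm_rpow (C := C) hp isClosed_cthickening.measurableSet
      hK.measure_lt_top.ne
      (fun n => (measurable_fderiv ℝ _).aestronglyMeasurable)
      (fun n x => ?_) (fun n x hx => fderiv_of_notMem_tsupport ℝ fun h => hx (hwK n h)) ?_
    · exact hfderiv n ▸ norm_normed_convolution_le (φ n) hmeas.aestronglyMeasurable hbound x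
    · simpa only [hfderiv] using ContDiffBump.ae_convolution_tendsto_right_of_locallyIntegrable hφ0
        (Eventually.of_forall hφ2) hint

lemma lam1_mul_lpMass_le_of_lipschitzWith {N : ℕ} {p : ℝ} {Ω : Set (EuclideanSpace ℝ (Fin N))}
    {v : EuclideanSpace ℝ (Fin N) → ℝ} {C : NNReal} (hp : 0 < p) (hΩ : IsOpen Ω)
    (hv : LipschitzWith C v) (hc : HasCompactSupport v) (hvΩ : tsupport v ⊆ Ω) :
    lam1 p Ω * lpMass p volume v ≤ dirichletEnergy p volume v := by
  obtain ⟨w, hw, hmass, henergy⟩ := exists_isTestFunction_tendsto (μ := volume) hp hΩ hv hc hvΩ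
  exact le_of_tendsto_of_tendsto' (hmass.const_mul _) henergy fun n => (hw n).lam1_mul_lpMass_le hp

end Mollification

/-! ### Scaling -/

section Scaling

section

variable {E : Type*} [NormedAddCommGroup E] [NormedSpace ℝ E] [FiniteDimensional ℝ E]
  [MeasurableSpace E] [BorelSpace E] {μ : Measure E} [μ.IsAddHaarMeasure]

lemma lpMass_comp_smul_sub (p k : ℝ) (u : E → ℝ) (c : E) :
    lpMass p μ (fun x => u (k • (x - c))) = |(k ^ Module.finrank ℝ E)⁻¹| * lpMass p μ u := by
  simp only [lpMass]
  rw [integral_sub_right_eq_self (fun x => |u (k • x)| ^ p) c,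
    Measure.integral_comp_smul μ (fun x => |u x| ^ p) k, smul_eq_mul]

lemma dirichletEnergy_comp_smul_sub {k : ℝ} (hk : 0 ≤ k) (p : ℝ) (u : E → ℝ) (c : E) :
    dirichletEnergy p μ (fun x => u (k • (x - c))) =
      |(k ^ Module.finrank ℝ E)⁻¹| * (k ^ p * dirichletEnergy p μ u) := by
  have hfderiv x : ‖fderiv ℝ (fun x => u (k • (x - c))) x‖ ^ p =
      k ^ p * ‖fderiv ℝ u (k • (x - c))‖ ^ p := by
    rw [fderiv_comp_sub (f := fun x => u (k • x)) c, fderiv_comp_smul, norm_smul,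
      Real.norm_of_nonneg hk, Real.mul_rpow hk (norm_nonneg _)]
  simp only [dirichletEnergy, hfderiv, integral_const_mul]
  rw [integral_sub_right_eq_self (fun x => ‖fderiv ℝ u (k • x)‖ ^ p) c,
    Measure.integral_comp_smul μ (fun x => ‖fderiv ℝ u x‖ ^ p) k, smul_eq_mul, mul_left_comm]

end

variable {N : ℕ} {p k : ℝ} {Ω : Set (EuclideanSpace ℝ (Fin N))}

lemma lam1_preimage_smul_sub_le (hp : 0 < p) (hΩ : IsOpen Ω) (hne : Ω.Nonempty) (hk : 0 < k)
    (c : EuclideanSpace ℝ (Fin N)) :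
    lam1 p ((fun x => k • (x - c)) ⁻¹' Ω) ≤ k ^ p * lam1 p Ω := by
  rw [← inv_mul_le_iff₀ (by positivity)]
  refine le_lam1 hp hΩ hne fun u hu => ?_
  have hA : ContDiff ℝ (⊤ : ℕ∞) fun x : EuclideanSpace ℝ (Fin N) => k • (x - c) := by fun_prop
  have hle : lam1 p ((fun x => k • (x - c)) ⁻¹' Ω) * lpMass p volume (fun x => u (k • (x - c))) ≤
      dirichletEnergy p volume (fun x => u (k • (x - c))) :=
    (hu.comp_homeomorph ((Homeomorph.subRight c).trans (Homeomorph.smulOfNeZero k hk.ne'))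
      hA).lam1_mul_lpMass_le hp
  rw [lpMass_comp_smul_sub, dirichletEnergy_comp_smul_sub hk.le, mul_left_comm] at hle
  rw [mul_assoc, inv_mul_le_iff₀ (by positivity)]
  exact le_of_mul_le_mul_left hle (by positivity)

lemma lam1_ball_le {R R' : ℝ} (hp : 0 < p) (hR : 0 < R) (hR' : 0 < R')
    (c : EuclideanSpace ℝ (Fin N)) :
    lam1 p (ball c R') ≤ (R / R') ^ p * lam1 p (ball (0 : EuclideanSpace ℝ (Fin N)) R) := by
  have hpre : (fun x => (R / R') • (x - c)) ⁻¹' ball 0 R = ball c R' := by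
    ext x
    rw [mem_preimage, mem_ball_zero_iff, norm_smul, Real.norm_of_nonneg (by positivity),
      div_mul_eq_mul_div, div_lt_iff₀ hR', mul_lt_mul_iff_right₀ hR, mem_ball_iff_norm]
  exact hpre ▸ lam1_preimage_smul_sub_le hp isOpen_ball (nonempty_ball.2 hR) (by positivity) c

end Scaling

/-! ### Reduction to radial profiles -/

section Polar

open Module (finrank)

variable {E : Type*} [NormedAddCommGroup E] [NormedSpace ℝ E] [FiniteDimensional ℝ E]
  [MeasurableSpace E] [BorelSpace E] {μ : Measure E} [μ.IsAddHaarMeasure]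

lemma integrable_toSphere_prod {H : E → ℝ} (hH : Integrable H μ) :
    Integrable (fun q : sphere (0 : E) 1 × Ioi (0 : ℝ) => H (q.2.1 • q.1.1))
      (μ.toSphere.prod (.volumeIoiPow (finrank ℝ E - 1))) := by
  rw [← μ.measurePreserving_homeomorphUnitSphereProd.integrable_comp_emb
    (Homeomorph.measurableEmbedding _)]
  have hcomp : (fun q : sphere (0 : E) 1 × Ioi (0 : ℝ) => H (q.2.1 • q.1.1)) ∘
      homeomorphUnitSphereProd E = H ∘ Subtype.val :=
    funext fun x => by simp [smul_smul, norm_ne_zero_iff.2 x.2]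
  rw [hcomp, ← integrableOn_iff_comap_subtypeVal (by measurability)]
  exact hH.integrableOn

variable [Nontrivial E]

lemma integral_eq_integral_toSphere_prod (H : E → ℝ) :
    ∫ x, H x ∂μ =
      ∫ q, H (q.2.1 • q.1.1) ∂(μ.toSphere.prod (.volumeIoiPow (finrank ℝ E - 1))) := by
  have hpunctured : ∫ x, H x ∂μ = ∫ x : ({0}ᶜ : Set E), H x ∂(μ.comap (↑)) := by
    rw [integral_subtype_comap (measurableSet_singleton _).compl, restrict_compl_singleton]
  rw [hpunctured, ← μ.measurePreserving_homeomorphUnitSphereProd.integral_comp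
    (Homeomorph.measurableEmbedding _) fun q => H (q.2.1 • q.1.1)]
  refine integral_congr_ae (Eventually.of_forall fun x => ?_)
  simp [smul_smul, norm_ne_zero_iff.2 x.2]

lemma integral_comp_norm_smul (H : E → ℝ) (ω : E) :
    ∫ x, H (‖x‖ • ω) ∂μ =
      μ.toSphere.real univ * ∫ r, H (r.1 • ω) ∂(.volumeIoiPow (finrank ℝ E - 1)) := by
  rw [integral_eq_integral_toSphere_prod, ← smul_eq_mul, ← integral_fun_snd]
  refine integral_congr_ae (Eventually.of_forall fun q => ?_)
  simp [norm_smul, abs_of_pos (mem_Ioi.1 q.2.2)]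

lemma exists_integral_comp_norm_smul_le {H : E → ℝ} (hH : Integrable H μ) :
    ∃ ω : E, ‖ω‖ = 1 ∧ ∫ x, H (‖x‖ • ω) ∂μ ≤ ∫ x, H x ∂μ := by
  have hint := integrable_toSphere_prod hH
  have : NeZero μ.toSphere := ⟨μ.toSphere_ne_zero⟩
  obtain ⟨ω, hω⟩ := exists_le_average (NeZero.ne μ.toSphere) hint.integral_prod_left
  refine ⟨ω, by simp, ?_⟩
  rw [average_eq, smul_eq_mul, le_inv_mul_iff₀ measureReal_univ_pos] at hω
  rwa [integral_comp_norm_smul, integral_eq_integral_toSphere_prod H, integral_prod _ hint]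

end Polar

section Profile

/-- A `C¹` radial profile supported in the open interval `(R, R₁)` and normalised so that its
largest absolute value is `1`, attained (with positive sign) at `t`. -/
structure IsAnnularProfile (R R₁ : ℝ) (f : ℝ → ℝ) (t : ℝ) : Prop where
  contDiff : ContDiff ℝ 1 f
  tsupport_subset : tsupport f ⊆ Ioo R R₁
  map_peak : f t = 1
  abs_le_one : ∀ r, |f r| ≤ 1

/-- The restriction of `u` to the ray in direction `ω`, as a function of the signed radius that
vanishes on `(-∞, 0]`. -/
noncomputable def rayProfile {E : Type*} [AddCommGroup E] [Module ℝ E] (u : E → ℝ) (ω : E) :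
    ℝ → ℝ :=
  (Ioi 0).indicator fun r => u (r • ω)

variable {E : Type*} [NormedAddCommGroup E] [NormedSpace ℝ E] {u : E → ℝ} {ω : E} {p R R₁ Q : ℝ}

lemma tsupport_rayProfile_subset (hω : ‖ω‖ = 1) (hu : tsupport u ⊆ ball 0 R₁ \ closedBall 0 R) :
    tsupport (rayProfile u ω) ⊆ Ioo R R₁ := by
  have hclosed : IsClosed (Ici (0 : ℝ) ∩ (· • ω) ⁻¹' tsupport u) :=
    isClosed_Ici.inter ((isClosed_tsupport u).preimage (by fun_prop))
  refine (closure_minimal (fun r hr => ?_) hclosed).trans fun r hr => ?_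
  · obtain ⟨hr0, hru⟩ := indicator_apply_ne_zero.1 hr
    exact ⟨(mem_Ioi.1 hr0).le, subset_tsupport u hru⟩
  · have hmem := hu hr.2
    rw [Set.mem_sdiff, mem_ball_zero_iff, mem_closedBall_zero_iff, norm_smul, hω, mul_one,
      Real.norm_of_nonneg hr.1, not_le] at hmem
    exact hmem.symm

lemma rayProfile_eventuallyEq {r : ℝ} (hr : 0 < r) : rayProfile u ω =ᶠ[𝓝 r] fun r => u (r • ω) :=
  (lt_mem_nhds hr).mono fun _ hs => indicator_of_mem (mem_Ioi.2 hs) _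

lemma contDiff_rayProfile {n : WithTop ℕ∞} (hR : 0 < R) (hu : ContDiff ℝ n u)
    (hs : tsupport (rayProfile u ω) ⊆ Ioo R R₁) : ContDiff ℝ n (rayProfile u ω) := by
  refine contDiff_iff_contDiffAt.2 fun r => ?_
  by_cases hr : r ∈ tsupport (rayProfile u ω)
  · exact ContDiffAt.congr_of_eventuallyEq
      (hu.comp (contDiff_id.smul contDiff_const)).contDiffAt
      (rayProfile_eventuallyEq (hR.trans (hs hr).1))
  · exact contDiffAt_const.congr_of_eventuallyEq (notMem_tsupport_iff_eventuallyEq.1 hr)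

lemma abs_deriv_rayProfile_le {r : ℝ} (hω : ‖ω‖ = 1) (hR : 0 ≤ R) (hu : Differentiable ℝ u)
    (hs : tsupport (rayProfile u ω) ⊆ Ioo R R₁) :
    |deriv (rayProfile u ω) r| ≤ ‖fderiv ℝ u (r • ω)‖ := by
  by_cases hr : r ∈ tsupport (rayProfile u ω)
  · have hray : HasDerivAt (fun r : ℝ => r • ω) ω r := by
      simpa using (hasDerivAt_id r).smul_const ω
    have hcomp : HasDerivAt (fun r : ℝ => u (r • ω)) (fderiv ℝ u (r • ω) ω) r :=
      (hu (r • ω)).hasFDerivAt.comp_hasDerivAt r hray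
    rw [(rayProfile_eventuallyEq (hR.trans_lt (hs hr).1)).deriv_eq, hcomp.deriv,
      ← Real.norm_eq_abs]
    simpa [hω] using (fderiv ℝ u (r • ω)).le_opNorm ω
  · simp [deriv_of_notMem_tsupport hr]

lemma rayProfile_norm (hu : u 0 = 0) (x : E) : rayProfile u ω ‖x‖ = u (‖x‖ • ω) := by
  rcases eq_or_ne x 0 with rfl | hx
  · simp [rayProfile, hu]
  · exact indicator_of_mem (mem_Ioi.2 (norm_pos_iff.2 hx)) _

lemma hasCompactSupport_comp_norm_smul [ProperSpace E] {F : Type*} [Zero F] {g : E → F}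
    (hω : ‖ω‖ = 1) (hg : HasCompactSupport g) : HasCompactSupport fun x : E => g (‖x‖ • ω) := by
  obtain ⟨r, hr⟩ := hg.isCompact.isBounded.subset_closedBall 0
  refine .intro (isCompact_closedBall 0 r) fun x hx => image_eq_zero_of_notMem_tsupport fun h => ?_
  have hxr := hr h
  rw [mem_closedBall_zero_iff, norm_smul, norm_norm, hω, mul_one] at hxr
  exact hx (mem_closedBall_zero_iff.2 hxr)

variable [FiniteDimensional ℝ E] [MeasurableSpace E] [BorelSpace E] {μ : Measure E}
  [μ.IsAddHaarMeasure]

lemma exists_lpMass_deriv_rayProfile_lt [Nontrivial E] (hp : 0 < p) (hR : 0 < R)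
    (hu : ContDiff ℝ 1 u) (hc : HasCompactSupport u) (hs : tsupport u ⊆ ball 0 R₁ \ closedBall 0 R)
    (hQ : dirichletEnergy p μ u < Q * lpMass p μ u) :
    ∃ ω : E, ‖ω‖ = 1 ∧ lpMass p μ (fun x => deriv (rayProfile u ω) ‖x‖) <
      Q * lpMass p μ (fun x => rayProfile u ω ‖x‖) := by
  have hD : Continuous (fderiv ℝ u) := hu.continuous_fderiv one_ne_zero
  have hiD := integrable_norm_rpow_of_hasCompactSupport (μ := μ) hp hD (hc.fderiv ℝ)
  have hiu := (integrable_norm_rpow_of_hasCompactSupport (μ := μ) hp hu.continuous hc).const_mul Q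
  obtain ⟨ω, hω, hle⟩ := exists_integral_comp_norm_smul_le (hiD.sub hiu)
  have hray : Continuous fun x : E => ‖x‖ • ω := by fun_prop
  have hiDω : Integrable (fun x => ‖fderiv ℝ u (‖x‖ • ω)‖ ^ p) μ :=
    integrable_norm_rpow_of_hasCompactSupport hp (hD.comp hray)
      (hasCompactSupport_comp_norm_smul hω (hc.fderiv ℝ))
  have hiuω : Integrable (fun x => Q * ‖u (‖x‖ • ω)‖ ^ p) μ :=
    (integrable_norm_rpow_of_hasCompactSupport hp (hu.continuous.comp hray)
      (hasCompactSupport_comp_norm_smul hω hc)).const_mul Q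
  have hdiff : ∫ x, ‖fderiv ℝ u (‖x‖ • ω)‖ ^ p ∂μ - Q * ∫ x, ‖u (‖x‖ • ω)‖ ^ p ∂μ ≤
      dirichletEnergy p μ u - Q * lpMass p μ u := by
    rw [← integral_const_mul, ← integral_sub hiDω hiuω]
    refine hle.trans_eq ?_
    rw [integral_sub' hiD hiu, integral_const_mul]
    rfl
  have hu0 : u 0 = 0 := image_eq_zero_of_notMem_tsupport fun h => (hs h).2 (by simpa using hR.le)
  have henergy : lpMass p μ (fun x => deriv (rayProfile u ω) ‖x‖) ≤
      ∫ x, ‖fderiv ℝ u (‖x‖ • ω)‖ ^ p ∂μ :=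
    integral_mono_of_nonneg (Eventually.of_forall fun x => by positivity) hiDω
      (Eventually.of_forall fun x => Real.rpow_le_rpow (abs_nonneg _)
        (abs_deriv_rayProfile_le hω hR.le (hu.differentiable one_ne_zero)
          (tsupport_rayProfile_subset hω hs)) hp.le)
  refine ⟨ω, hω, ?_⟩
  simp only [lpMass, rayProfile_norm hu0, Real.norm_eq_abs] at hdiff henergy ⊢
  simp only [lpMass] at hQ
  linarith

lemma exists_isAnnularProfile_lpMass_deriv_lt [Nontrivial E] (hp : 0 < p) (hR : 0 < R)
    (hu : ContDiff ℝ 1 u) (hc : HasCompactSupport u) (hs : tsupport u ⊆ ball 0 R₁ \ closedBall 0 R)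
    (hQ : dirichletEnergy p μ u < Q * lpMass p μ u) :
    ∃ f t, IsAnnularProfile R R₁ f t ∧
      lpMass p μ (fun x => deriv f ‖x‖) < Q * lpMass p μ (fun x => f ‖x‖) := by
  obtain ⟨ω, hω, hlt⟩ := exists_lpMass_deriv_rayProfile_lt hp hR hu hc hs hQ
  have hsupp := tsupport_rayProfile_subset hω hs
  have hf := contDiff_rayProfile hR hu hsupp
  set f := rayProfile u ω
  have hfc : HasCompactSupport f :=
    isCompact_Icc.of_isClosed_subset (isClosed_tsupport f) (hsupp.trans Ioo_subset_Icc_self)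
  obtain ⟨t, ht⟩ := hf.continuous.norm.exists_forall_ge_of_hasCompactSupport hfc.norm
  have hft : f t ≠ 0 := fun h0 => by
    have hf0 r : f r = 0 := by simpa [h0] using ht r
    simp only [lpMass, hf0, abs_zero, Real.zero_rpow hp.ne', integral_zero, mul_zero] at hlt
    exact hlt.not_ge (integral_nonneg fun _ => by positivity)
  have hscale (g : ℝ → ℝ) : lpMass p μ (fun x => (f t)⁻¹ * g ‖x‖) =
      |(f t)⁻¹| ^ p * lpMass p μ (fun x => g ‖x‖) := by
    simp only [lpMass, abs_mul, Real.mul_rpow (abs_nonneg _) (abs_nonneg _), integral_const_mul]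
  refine ⟨fun r => (f t)⁻¹ * f r, t, ⟨contDiff_const.mul hf, ?_, inv_mul_cancel₀ hft, fun r => ?_⟩,
    ?_⟩
  · exact (closure_mono fun r => right_ne_zero_of_mul).trans hsupp
  · rw [abs_mul, abs_inv, inv_mul_le_one₀ (abs_pos.2 hft)]
    exact ht r
  · simp only [deriv_const_mul_field, hscale]
    rw [mul_left_comm]
    have := abs_pos.2 (inv_ne_zero hft)
    gcongr

end Profile

/-! ### Estimates for profiles -/

lemma measureReal_ball_pos {X : Type*} [PseudoMetricSpace X] [ProperSpace X] [MeasurableSpace X]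
    {μ : Measure X} [IsFiniteMeasureOnCompacts μ] [μ.IsOpenPosMeasure] (x : X) {r : ℝ}
    (hr : 0 < r) : 0 < μ.real (ball x r) :=
  ENNReal.toReal_pos (measure_ball_pos μ x hr).ne' measure_ball_lt_top.ne

section RadialEnergy

open Module (finrank)

variable {E : Type*} [NormedAddCommGroup E] [NormedSpace ℝ E] [MeasurableSpace E] {μ : Measure E}
  {f : ℝ → ℝ} {p R a b : ℝ}

lemma abs_sub_rpow_le_mul_integral (hp : 1 ≤ p) (hf : ContDiff ℝ 1 f) (hab : a ≤ b) :
    |f b - f a| ^ p ≤ (b - a) ^ (p - 1) * ∫ r in a..b, |deriv f r| ^ p := by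
  rcases hab.eq_or_lt with rfl | hlt
  · simp [Real.zero_rpow (zero_lt_one.trans_le hp).ne']
  have hD : Continuous fun r => |deriv f r| := (hf.continuous_deriv le_rfl).abs
  have hDp : Continuous fun r => |deriv f r| ^ p :=
    hD.rpow_const fun _ => Or.inr (zero_le_one.trans hp)
  have hL : 0 < b - a := sub_pos.2 hlt
  have hjensen : ((b - a)⁻¹ * ∫ r in a..b, |deriv f r|) ^ p ≤
      (b - a)⁻¹ * ∫ r in a..b, |deriv f r| ^ p := by
    simp only [← smul_eq_mul, ← interval_average_eq]
    rw [uIoc_of_le hab]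
    exact (convexOn_rpow hp).map_set_average_le
      (continuousOn_id.rpow_const fun _ _ => Or.inr (zero_le_one.trans hp)) isClosed_Ici
      (by simp [hlt]) (by simp) (Eventually.of_forall fun r => mem_Ici.2 (abs_nonneg _))
      hD.integrableOn_Ioc hDp.integrableOn_Ioc
  have hftc : |f b - f a| ≤ ∫ r in a..b, |deriv f r| := by
    rw [← intervalIntegral.integral_deriv_eq_sub
      (fun r _ => hf.differentiable one_ne_zero r)
      ((hf.continuous_deriv le_rfl).intervalIntegrable a b)]
    exact intervalIntegral.abs_integral_le_integral_abs hab
  calc |f b - f a| ^ p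
    _ ≤ (∫ r in a..b, |deriv f r|) ^ p := by gcongr
    _ = (b - a) ^ p * ((b - a)⁻¹ * ∫ r in a..b, |deriv f r|) ^ p := by
      rw [← Real.mul_rpow hL.le (mul_nonneg (by positivity) ((abs_nonneg _).trans hftc)),
        mul_inv_cancel_left₀ hL.ne']
    _ ≤ (b - a) ^ p * ((b - a)⁻¹ * ∫ r in a..b, |deriv f r| ^ p) := by gcongr
    _ = _ := by rw [← mul_assoc, Real.rpow_sub_one hL.ne', div_eq_mul_inv]

/-- The surface area of the sphere of radius `R` for the measure `μ`, that is, the density of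
the distribution of `‖x‖` under `μ` at `R`. -/
noncomputable def sphereArea (μ : Measure E) (R : ℝ) : ℝ :=
  finrank ℝ E * μ.real (ball 0 1) * R ^ (finrank ℝ E - 1)

variable [FiniteDimensional ℝ E] [Nontrivial E] [μ.IsAddHaarMeasure]

lemma sphereArea_pos (hR : 0 < R) : 0 < sphereArea μ R := by
  have hball : 0 < μ.real (ball (0 : E) 1) := measureReal_ball_pos 0 one_pos
  have hdim : (0 : ℝ) < finrank ℝ E := Nat.cast_pos.2 Module.finrank_pos
  unfold sphereArea
  positivity

variable [BorelSpace E]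

lemma sphereArea_mul_integral_le_integral_comp_norm {g : ℝ → ℝ} (hR : 0 ≤ R) (hRa : R ≤ a)
    (hab : a ≤ b) (hg : Continuous g) (hc : HasCompactSupport g) (h0 : 0 ≤ g) :
    sphereArea μ R * ∫ r in a..b, g r ≤ ∫ x, g ‖x‖ ∂μ := by
  have hweight : Continuous fun r : ℝ => r ^ (finrank ℝ E - 1) * g r := by fun_prop
  have hmono : R ^ (finrank ℝ E - 1) * ∫ r in a..b, g r ≤
      ∫ r in Ioi (0 : ℝ), r ^ (finrank ℝ E - 1) * g r := by
    rw [intervalIntegral.integral_of_le hab, ← integral_const_mul]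
    calc ∫ r in Ioc a b, R ^ (finrank ℝ E - 1) * g r
      _ ≤ ∫ r in Ioc a b, r ^ (finrank ℝ E - 1) * g r := by
        refine setIntegral_mono_on (hg.const_mul _).integrableOn_Ioc hweight.integrableOn_Ioc
          measurableSet_Ioc fun r hr => ?_
        have := hRa.trans hr.1.le
        have := h0 r
        gcongr
      _ ≤ _ := by
        refine setIntegral_mono_set
          (hweight.integrable_of_hasCompactSupport hc.mul_left).integrableOn ?_
          (LE.le.eventuallyLE fun r hr => (hR.trans hRa).trans_lt hr.1)
        filter_upwards [ae_restrict_mem measurableSet_Ioi] with r hr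
        exact mul_nonneg (pow_nonneg (mem_Ioi.1 hr).le _) (h0 r)
  have := mul_le_mul_of_nonneg_left hmono
    (by positivity : 0 ≤ finrank ℝ E * μ.real (ball (0 : E) 1))
  simpa only [sphereArea, integral_fun_norm_addHaar, smul_eq_mul, nsmul_eq_mul, mul_assoc]

lemma abs_sub_rpow_le_mul_lpMass_deriv (hp : 1 ≤ p) (hf : ContDiff ℝ 1 f)
    (hc : HasCompactSupport f) (hR : 0 < R) (hRa : R ≤ a) (hab : a ≤ b) :
    |f b - f a| ^ p ≤
      (b - a) ^ (p - 1) * (lpMass p μ (fun x => deriv f ‖x‖) / sphereArea μ R) := by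
  have hp0 := zero_lt_one.trans_le hp
  refine (abs_sub_rpow_le_mul_integral hp hf hab).trans ?_
  have := sub_nonneg.2 hab
  gcongr
  rw [le_div_iff₀' (sphereArea_pos hR)]
  exact sphereArea_mul_integral_le_integral_comp_norm hR.le hRa hab
    ((hf.continuous_deriv le_rfl).abs.rpow_const fun _ => Or.inr hp0.le)
    (hc.deriv.comp_left (g := fun y => |y| ^ p) (by simp [Real.zero_rpow hp0.ne']))
    fun _ => by positivity

end RadialEnergy

namespace IsAnnularProfile

variable {f : ℝ → ℝ} {p R R₁ r t : ℝ}

lemma hasCompactSupport (hf : IsAnnularProfile R R₁ f t) : HasCompactSupport f :=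
  isCompact_Icc.of_isClosed_subset (isClosed_tsupport f)
    (hf.tsupport_subset.trans Ioo_subset_Icc_self)

lemma apply_of_le (hf : IsAnnularProfile R R₁ f t) (hr : r ≤ R) : f r = 0 :=
  image_eq_zero_of_notMem_tsupport fun h => (hf.tsupport_subset h).1.not_ge hr

lemma apply_of_ge (hf : IsAnnularProfile R R₁ f t) (hr : R₁ ≤ r) : f r = 0 :=
  image_eq_zero_of_notMem_tsupport fun h => (hf.tsupport_subset h).2.not_ge hr

lemma peak_mem (hf : IsAnnularProfile R R₁ f t) : t ∈ Ioo R R₁ :=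
  hf.tsupport_subset (subset_tsupport f (by simp [hf.map_peak]))

lemma deriv_peak (hf : IsAnnularProfile R R₁ f t) : deriv f t = 0 :=
  IsLocalMax.deriv_eq_zero (Eventually.of_forall fun r =>
    (le_abs_self _).trans ((hf.abs_le_one r).trans_eq hf.map_peak.symm))

variable {E : Type*} [NormedAddCommGroup E] [NormedSpace ℝ E] [FiniteDimensional ℝ E]
  [MeasurableSpace E] [BorelSpace E] {μ : Measure E} [μ.IsAddHaarMeasure]

lemma lpMass_le (hp : 0 < p) (hf : IsAnnularProfile R R₁ f t) :
    lpMass p μ (fun x => f ‖x‖) ≤ μ.real (ball 0 R₁) := by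
  rw [← integral_indicator_one measurableSet_ball]
  refine integral_mono_of_nonneg (Eventually.of_forall fun x => by positivity)
    ((integrable_indicator_iff measurableSet_ball).2
      (integrableOn_const measure_ball_lt_top.ne)) (Eventually.of_forall fun x => ?_)
  by_cases hx : ‖x‖ < R₁
  · rw [indicator_of_mem (mem_ball_zero_iff.2 hx)]
    exact Real.rpow_le_one (abs_nonneg _) (hf.abs_le_one _) hp.le
  · simp [hf.apply_of_ge (not_lt.1 hx), Real.zero_rpow hp.ne',
      indicator_of_notMem (mt mem_ball_zero_iff.1 hx)]

variable [Nontrivial E]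

lemma one_le_mul_lpMass_deriv (hp : 1 ≤ p) (hR : 0 < R) (hf : IsAnnularProfile R R₁ f t) :
    1 ≤ (R₁ - R) ^ (p - 1) * (lpMass p μ (fun x => deriv f ‖x‖) / sphereArea μ R) := by
  have ht := hf.peak_mem
  calc 1 = |f t - f R| ^ p := by simp [hf.map_peak, hf.apply_of_le le_rfl]
    _ ≤ (t - R) ^ (p - 1) * (lpMass p μ (fun x => deriv f ‖x‖) / sphereArea μ R) :=
      abs_sub_rpow_le_mul_lpMass_deriv hp hf.contDiff hf.hasCompactSupport hR le_rfl ht.1.le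
    _ ≤ _ := by
      have := lpMass_nonneg (p := p) (μ := μ) (u := fun x => deriv f ‖x‖)
      have := (sphereArea_pos (μ := μ) hR).le
      have := sub_nonneg.2 ht.1.le
      have := ht.2.le
      gcongr

variable (μ) in
lemma exists_forall_abs_le_half (hp : 1 < p) (hR : 0 < R) (hRR : R < R₁) (A : ℝ) :
    ∃ d, 0 < d ∧ d ≤ (R₁ - R) / 2 ∧ ∀ f t, IsAnnularProfile R R₁ f t →
      lpMass p μ (fun x => deriv f ‖x‖) ≤ A → ∀ r, r ≤ R + d ∨ R₁ - d ≤ r → |f r| ≤ 1 / 2 := by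
  have hlim : Tendsto (fun d : ℝ => d ^ (p - 1) * (A / sphereArea μ R)) (𝓝[>] 0) (𝓝 0) := by
    have := ((Real.continuous_rpow_const (sub_pos.2 hp).le).mul_const
      (A / sphereArea μ R)).tendsto 0
    rw [Real.zero_rpow (sub_pos.2 hp).ne', zero_mul] at this
    exact this.mono_left nhdsWithin_le_nhds
  obtain ⟨d, hd, hd0, hdR⟩ := ((hlim.eventually_le_const
    (by positivity : (0 : ℝ) < (1 / 2) ^ p)).and (Ioc_mem_nhdsGT (half_pos (sub_pos.2 hRR)))).exists
  refine ⟨d, hd0, hdR, fun f t hf hA => ?_⟩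
  have hosc {a b : ℝ} (ha : R ≤ a) (hab : a ≤ b) (hbd : b - a ≤ d) : |f b - f a| ≤ 1 / 2 := by
    rw [← Real.rpow_le_rpow_iff (abs_nonneg _) (by norm_num) (zero_lt_one.trans hp)]
    refine (abs_sub_rpow_le_mul_lpMass_deriv (μ := μ) hp.le hf.contDiff hf.hasCompactSupport hR ha
      hab).trans (le_trans ?_ hd)
    have := (sphereArea_pos (μ := μ) hR).le
    have := lpMass_nonneg (p := p) (μ := μ) (u := fun x => deriv f ‖x‖)
    have := sub_nonneg.2 hab
    gcongr
  rintro r (hr | hr)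
  · rcases le_total r R with h | h
    · simp [hf.apply_of_le h]
    · simpa [hf.apply_of_le le_rfl] using hosc le_rfl h (by linarith)
  · rcases le_total R₁ r with h | h
    · simp [hf.apply_of_ge h]
    · simpa [hf.apply_of_ge le_rfl] using hosc (by linarith) h (by linarith)

end IsAnnularProfile

section EigenvaluePositivity

variable {N : ℕ} [NeZero N] {p R R₁ R' : ℝ}

lemma nonempty_annulus {E : Type*} [NormedAddCommGroup E] [NormedSpace ℝ E] [Nontrivial E]
    (hR : 0 ≤ R) (hRR : R < R₁) : (ball (0 : E) R₁ \ closedBall 0 R).Nonempty := by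
  obtain ⟨r, hRr, hr⟩ := exists_between hRR
  obtain ⟨x, rfl⟩ := exists_norm_eq E (hR.trans hRr.le)
  exact ⟨x, mem_ball_zero_iff.2 hr, fun h => hRr.not_ge (mem_closedBall_zero_iff.1 h)⟩

lemma exists_isAnnularProfile_of_lam1_lt {Q : ℝ} (hp : 0 < p) (hR : 0 < R) (hRR : R < R₁)
    (h : lam1 p (ball (0 : EuclideanSpace ℝ (Fin N)) R₁ \ closedBall 0 R) < Q) :
    ∃ f t, IsAnnularProfile R R₁ f t ∧
      lpMass p volume (fun x : EuclideanSpace ℝ (Fin N) => deriv f ‖x‖) <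
        Q * lpMass p volume (fun x : EuclideanSpace ℝ (Fin N) => f ‖x‖) := by
  obtain ⟨u, hu, hlt⟩ := exists_isTestFunction_of_lam1_lt hp
    (isOpen_ball.sdiff isClosed_closedBall) (nonempty_annulus hR.le hRR) h
  exact exists_isAnnularProfile_lpMass_deriv_lt hp hR (hu.contDiff.of_le (by simp))
    hu.hasCompactSupport hu.tsupport_subset hlt

lemma lam1_annulus_pos (hp : 1 ≤ p) (hR : 0 < R) (hRR : R < R₁) :
    0 < lam1 p (ball (0 : EuclideanSpace ℝ (Fin N)) R₁ \ closedBall 0 R) := by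
  set V := volume.real (ball (0 : EuclideanSpace ℝ (Fin N)) R₁)
  set S := sphereArea (volume : Measure (EuclideanSpace ℝ (Fin N))) R
  have hV : 0 < V := measureReal_ball_pos 0 (hR.trans hRR)
  have hS : 0 < S := sphereArea_pos hR
  have hL : 0 < (R₁ - R) ^ (p - 1) := Real.rpow_pos_of_pos (sub_pos.2 hRR) _
  refine (by positivity : 0 < S / ((R₁ - R) ^ (p - 1) * V)).trans_le ?_
  by_contra! hlt
  obtain ⟨f, t, hf, hft⟩ := exists_isAnnularProfile_of_lam1_lt (zero_lt_one.trans_le hp) hR hRR hlt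
  have hone := hf.one_le_mul_lpMass_deriv (μ := volume) (E := EuclideanSpace ℝ (Fin N)) hp hR
  have hmass := hf.lpMass_le (μ := volume) (E := EuclideanSpace ℝ (Fin N)) (zero_lt_one.trans_le hp)
  refine hone.not_gt ?_
  calc _
    _ < (R₁ - R) ^ (p - 1) * (S / ((R₁ - R) ^ (p - 1) * V) * V / S) := by
      gcongr
      exact hft.trans_le (by gcongr)
    _ = 1 := by field_simp

lemma lam1_ball_pos (hp : 1 ≤ p) (hR : 0 < R) :
    0 < lam1 p (ball (0 : EuclideanSpace ℝ (Fin N)) R) := by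
  obtain ⟨c, hc⟩ := exists_norm_eq (EuclideanSpace ℝ (Fin N)) (by positivity : 0 ≤ 2 * R)
  have hsub : ball c R ⊆ ball 0 (3 * R) \ closedBall 0 R := fun x hx => by
    rw [mem_ball_iff_norm'] at hx
    rw [Set.mem_sdiff, mem_ball_zero_iff, mem_closedBall_zero_iff]
    have hsub₁ := norm_sub_norm_le c x
    have hsub₂ := norm_sub_rev x c ▸ norm_sub_norm_le x c
    constructor <;> linarith
  calc 0 < lam1 p (ball (0 : EuclideanSpace ℝ (Fin N)) (3 * R) \ closedBall 0 R) :=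
        lam1_annulus_pos hp hR (by linarith)
    _ ≤ lam1 p (ball c R) :=
      lam1_anti (zero_lt_one.trans_le hp) isOpen_ball ⟨c, mem_ball_self hR⟩ hsub
    _ ≤ (R / R) ^ p * lam1 p (ball 0 R) := lam1_ball_le (zero_lt_one.trans_le hp) hR hR c
    _ = lam1 p (ball 0 R) := by rw [div_self hR.ne', Real.one_rpow, one_mul]

lemma lam1_ball_lt (hp : 1 ≤ p) (hR : 0 < R) (hRR : R < R') (c : EuclideanSpace ℝ (Fin N)) :
    lam1 p (ball c R') < lam1 p (ball (0 : EuclideanSpace ℝ (Fin N)) R) :=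
  (lam1_ball_le (zero_lt_one.trans_le hp) hR (hR.trans hRR) c).trans_lt
    (mul_lt_of_lt_one_left (lam1_ball_pos hp hR)
      (Real.rpow_lt_one (div_nonneg hR.le (hR.trans hRR).le) ((div_lt_one (hR.trans hRR)).2 hRR)
        (zero_lt_one.trans_le hp)))

end EigenvaluePositivity

/-! ### Eccentric competitors -/

section Splitting

variable {E : Type*} [NormedAddCommGroup E] [NormedSpace ℝ E] [FiniteDimensional ℝ E]
  [MeasurableSpace E] [BorelSpace E] {μ : Measure E} [μ.IsAddHaarMeasure] {α : ℝ → ℝ}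

lemma integrable_comp_max_norm (hα : Continuous α) (hc : HasCompactSupport α) (t : ℝ) :
    Integrable (fun x => α (max ‖x‖ t)) μ := by
  have hcont : Continuous fun x : E => α (max ‖x‖ t) := by fun_prop
  obtain ⟨r, hr⟩ := hc.isCompact.bddAbove
  refine hcont.integrable_of_hasCompactSupport (.intro (isCompact_closedBall 0 r) fun x hx =>
    image_eq_zero_of_notMem_tsupport fun h => hx ?_)
  exact mem_closedBall_zero_iff.2 ((le_max_left _ _).trans (hr h))

lemma integrable_comp_min_norm_sub (hα : Continuous α) (t : ℝ) (c : E) :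
    Integrable (fun x => α (min ‖x - c‖ t) - α t) μ := by
  have hcont : Continuous fun x : E => α (min ‖x - c‖ t) - α t := by fun_prop
  refine hcont.integrable_of_hasCompactSupport (.intro (isCompact_closedBall c t) fun x hx => ?_)
  rw [mem_closedBall_iff_norm, not_le] at hx
  simp [min_eq_right hx.le]

lemma integral_comp_max_norm_add_comp_min_norm_sub (hα : Continuous α) (hc : HasCompactSupport α)
    (t : ℝ) (c : E) :
    ∫ x, (α (max ‖x‖ t) + (α (min ‖x - c‖ t) - α t)) ∂μ = ∫ x, α ‖x‖ ∂μ := by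
  have hmax := integrable_comp_max_norm (μ := μ) hα hc t
  have hmin := integrable_comp_min_norm_sub (μ := μ) hα t 0
  simp only [sub_zero] at hmin
  calc ∫ x, (α (max ‖x‖ t) + (α (min ‖x - c‖ t) - α t)) ∂μ
    _ = ∫ x, α (max ‖x‖ t) ∂μ + ∫ x, (α (min ‖x‖ t) - α t) ∂μ := by
      rw [integral_add hmax (integrable_comp_min_norm_sub hα t c),
        integral_sub_right_eq_self (fun x => α (min ‖x‖ t) - α t) c]
    _ = ∫ x, (α (max ‖x‖ t) + (α (min ‖x‖ t) - α t)) ∂μ := (integral_add hmax hmin).symm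
    _ = ∫ x, α ‖x‖ ∂μ := by
      congr with x
      rcases le_total ‖x‖ t with h | h <;> simp [h]

end Splitting

section Competitor

variable {E : Type*} [NormedAddCommGroup E] {f : ℝ → ℝ} {t p R R₁ : ℝ} {c x : E}

/-- The radial function `|f ‖x‖|` with its part inside the sphere `‖x‖ = t` recentred at `c`: the
minimum glues the outer part, extended by `|f t|` inside, to the translated inner part, extended by
`|f t|` outside. -/
noncomputable def eccentricCompetitor (f : ℝ → ℝ) (t : ℝ) (c x : E) : ℝ :=
  min |f (max ‖x‖ t)| |f (min ‖x - c‖ t)|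

lemma lipschitzWith_max_norm (t : ℝ) : LipschitzWith 1 fun x : E => max ‖x‖ t :=
  lipschitzWith_one_norm.max_const t

lemma lipschitzWith_min_norm_sub (t : ℝ) (c : E) : LipschitzWith 1 fun x => min ‖x - c‖ t := by
  simpa only [dist_eq_norm] using (LipschitzWith.dist_left c).min_const t

lemma eccentricCompetitor_nonneg : 0 ≤ eccentricCompetitor f t c x :=
  le_min (abs_nonneg _) (abs_nonneg _)

lemma lipschitzWith_eccentricCompetitor {C : NNReal} (hf : LipschitzWith C f) (t : ℝ) (c : E) :
    LipschitzWith C (eccentricCompetitor f t c) := by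
  have habs : LipschitzWith C fun r => |f r| := by
    simpa only [one_mul, Function.comp_def, Real.norm_eq_abs] using lipschitzWith_one_norm.comp hf
  simpa only [mul_one, max_self] using!
    (habs.comp (lipschitzWith_max_norm t)).min (habs.comp (lipschitzWith_min_norm_sub t c))

lemma tsupport_eccentricCompetitor_subset (hf : tsupport f ⊆ Ioo R R₁) :
    tsupport (eccentricCompetitor f t c) ⊆ ball 0 R₁ \ closedBall c R := by
  have hclosed : IsClosed {x : E | max ‖x‖ t ∈ tsupport f ∧ min ‖x - c‖ t ∈ tsupport f} :=
    ((isClosed_tsupport f).preimage (lipschitzWith_max_norm t).continuous).inter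
      ((isClosed_tsupport f).preimage (lipschitzWith_min_norm_sub t c).continuous)
  refine (closure_minimal (fun x hx => ?_) hclosed).trans fun x hx => ⟨?_, fun h => ?_⟩
  · refine ⟨subset_tsupport f fun h => hx ?_, subset_tsupport f fun h => hx ?_⟩ <;>
      simp [eccentricCompetitor, h]
  · exact mem_ball_zero_iff.2 ((le_max_left _ _).trans_lt (hf hx.1).2)
  · exact ((hf hx.2).1.trans_le (min_le_left _ _)).not_ge (mem_closedBall_iff_norm.1 h)

lemma eventually_abs_comp_sub_abs_comp_le {ψ : E → ℝ} {K : ℝ} (hf : ContDiff ℝ 1 f)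
    (hψ : LipschitzWith 1 ψ) (hK : |deriv f (ψ x)| < K) :
    ∀ᶠ y in 𝓝 x, ‖|f (ψ y)| - |f (ψ x)|‖ ≤ K * ‖y - x‖ := by
  lift K to NNReal using (abs_nonneg _).trans hK.le
  have hstrict := hf.contDiffAt.hasStrictFDerivAt (x := ψ x) one_ne_zero
  obtain ⟨s, hs, hlip⟩ := hstrict.exists_lipschitzOnWith_of_nnnorm_lt K (by
    rwa [← NNReal.coe_lt_coe, coe_nnnorm, ← norm_deriv_eq_norm_fderiv])
  filter_upwards [hψ.continuous.continuousAt hs] with y hy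
  calc ‖|f (ψ y)| - |f (ψ x)|‖
    _ ≤ |f (ψ y) - f (ψ x)| := abs_abs_sub_abs_le_abs_sub _ _
    _ ≤ K * |ψ y - ψ x| := hlip.dist_le_mul _ hy _ (mem_of_mem_nhds hs)
    _ ≤ K * ‖y - x‖ := by
      gcongr
      simpa [dist_eq_norm] using hψ.dist_le_mul y x

variable [NormedSpace ℝ E]

lemma norm_fderiv_eccentricCompetitor_le (hf : ContDiff ℝ 1 f) :
    ‖fderiv ℝ (eccentricCompetitor f t c) x‖ ≤
      max |deriv f (max ‖x‖ t)| |deriv f (min ‖x - c‖ t)| := by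
  refine le_of_forall_gt_imp_ge_of_dense fun K hK => ?_
  obtain ⟨hK₁, hK₂⟩ := max_lt_iff.1 hK
  refine norm_fderiv_le_of_lip' ℝ ((abs_nonneg _).trans hK₁.le) ?_
  filter_upwards [eventually_abs_comp_sub_abs_comp_le hf (lipschitzWith_max_norm t) hK₁,
    eventually_abs_comp_sub_abs_comp_le hf (lipschitzWith_min_norm_sub t c) hK₂] with y hy₁ hy₂
  exact (abs_min_sub_min_le_max _ _ _ _).trans (max_le hy₁ hy₂)

variable [FiniteDimensional ℝ E]

lemma hasCompactSupport_eccentricCompetitor (hf : tsupport f ⊆ Ioo R R₁) :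
    HasCompactSupport (eccentricCompetitor f t c) :=
  (isCompact_closedBall 0 R₁).of_isClosed_subset (isClosed_tsupport _)
    ((tsupport_eccentricCompetitor_subset hf).trans (sdiff_subset.trans ball_subset_closedBall))

variable [MeasurableSpace E] [BorelSpace E] {μ : Measure E} [μ.IsAddHaarMeasure]

lemma dirichletEnergy_eccentricCompetitor_le (hp : 0 < p) (hf : ContDiff ℝ 1 f)
    (hc : HasCompactSupport f) (ht : deriv f t = 0) :
    dirichletEnergy p μ (eccentricCompetitor f t c) ≤ lpMass p μ fun x => deriv f ‖x‖ := by
  have hcont : Continuous fun r => |deriv f r| ^ p :=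
    (hf.continuous_deriv le_rfl).abs.rpow_const fun _ => Or.inr hp.le
  have hsupp : HasCompactSupport fun r => |deriv f r| ^ p :=
    hc.deriv.comp_left (g := fun y => |y| ^ p) (by simp [Real.zero_rpow hp.ne'])
  rw [lpMass, ← integral_comp_max_norm_add_comp_min_norm_sub hcont hsupp t c]
  refine integral_mono_of_nonneg (Eventually.of_forall fun x => by positivity)
    ((integrable_comp_max_norm hcont hsupp t).add (integrable_comp_min_norm_sub hcont t c))
    (Eventually.of_forall fun x => ?_)
  have hmax : 0 ≤ |deriv f (max ‖x‖ t)| ^ p := by positivity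
  have hmin : 0 ≤ |deriv f (min ‖x - c‖ t)| ^ p := by positivity
  simp only [ht, abs_zero, Real.zero_rpow hp.ne', sub_zero]
  rcases le_max_iff.1 (norm_fderiv_eccentricCompetitor_le (t := t) (c := c) (x := x) hf) with h | h
  all_goals linarith [Real.rpow_le_rpow (norm_nonneg _) h hp.le]

end Competitor

namespace IsAnnularProfile

variable {E : Type*} [NormedAddCommGroup E] {f : ℝ → ℝ} {t p R R₁ : ℝ} {c : E} {B : Set E}

-- Besides `a ^ p + b ^ p = min a b ^ p + max a b ^ p`, this uses `max a b ≤ 1`, with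
-- `max a b ≤ 1 / 2` on `B`.
lemma add_indicator_le_eccentricCompetitor_rpow (hp : 0 < p) (hf : IsAnnularProfile R R₁ f t)
    (hB : ∀ x ∈ B, |f (max ‖x‖ t)| ≤ 1 / 2 ∧ |f (min ‖x - c‖ t)| ≤ 1 / 2) (x : E) :
    |f (max ‖x‖ t)| ^ p + (|f (min ‖x - c‖ t)| ^ p - |f t| ^ p) +
        B.indicator (fun _ => 1 - (1 / 2 : ℝ) ^ p) x ≤
      |eccentricCompetitor f t c x| ^ p := by
  rw [abs_of_nonneg eccentricCompetitor_nonneg, eccentricCompetitor, hf.map_peak, abs_one,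
    Real.one_rpow]
  set a := |f (max ‖x‖ t)|
  set b := |f (min ‖x - c‖ t)|
  have hab : 0 ≤ max a b := le_max_of_le_left (abs_nonneg _)
  have hsplit : a ^ p + b ^ p = min a b ^ p + max a b ^ p := by
    rcases le_total a b with h | h <;> simp [h, add_comm]
  have hmax : max a b ^ p ≤ 1 - B.indicator (fun _ => 1 - (1 / 2 : ℝ) ^ p) x := by
    by_cases hx : x ∈ B
    · rw [indicator_of_mem hx, sub_sub_cancel]
      exact Real.rpow_le_rpow hab (max_le (hB x hx).1 (hB x hx).2) hp.le
    · rw [indicator_of_notMem hx, sub_zero]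
      exact Real.rpow_le_one hab (max_le (hf.abs_le_one _) (hf.abs_le_one _)) hp.le
  linarith

variable [NormedSpace ℝ E] [FiniteDimensional ℝ E] [MeasurableSpace E] [BorelSpace E]
  {μ : Measure E} [μ.IsAddHaarMeasure]

lemma lpMass_add_le_lpMass_eccentricCompetitor (hp : 0 < p) (hf : IsAnnularProfile R R₁ f t)
    (hBm : MeasurableSet B) (hBμ : μ B ≠ ∞)
    (hB : ∀ x ∈ B, |f (max ‖x‖ t)| ≤ 1 / 2 ∧ |f (min ‖x - c‖ t)| ≤ 1 / 2) :
    lpMass p μ (fun x => f ‖x‖) + (1 - (1 / 2) ^ p) * μ.real B ≤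
      lpMass p μ (eccentricCompetitor f t c) := by
  have hcont : Continuous fun r => |f r| ^ p :=
    hf.contDiff.continuous.abs.rpow_const fun _ => Or.inr hp.le
  have hsupp : HasCompactSupport fun r => |f r| ^ p :=
    hf.hasCompactSupport.comp_left (g := fun y => |y| ^ p) (by simp [Real.zero_rpow hp.ne'])
  have hint := (integrable_comp_max_norm (μ := μ) hcont hsupp t).add
    (integrable_comp_min_norm_sub hcont t c)
  have hintB : Integrable (B.indicator fun _ => 1 - (1 / 2 : ℝ) ^ p) μ :=
    (integrable_indicator_iff hBm).2 (integrableOn_const hBμ)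
  obtain ⟨C, hC⟩ := hf.contDiff.lipschitzWith_of_hasCompactSupport hf.hasCompactSupport one_ne_zero
  rw [mul_comm, ← smul_eq_mul, ← integral_indicator_const _ hBm, lpMass,
    ← integral_comp_max_norm_add_comp_min_norm_sub hcont hsupp t c]
  refine (integral_add hint hintB).symm.trans_le (integral_mono (hint.add hintB) ?_ ?_)
  · exact integrable_norm_rpow_of_hasCompactSupport hp
      (lipschitzWith_eccentricCompetitor hC t c).continuous
      (hasCompactSupport_eccentricCompetitor hf.tsupport_subset)
  · exact hf.add_indicator_le_eccentricCompetitor_rpow hp hB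

end IsAnnularProfile

/-! ### Conclusion -/

section Room

variable {E : Type*} [NormedAddCommGroup E] {R R₁ d : ℝ}

lemma exists_center_forall_mem_ball [NormedSpace ℝ E] [Nontrivial E] (hR : 0 ≤ R) (hd : 0 < d)
    (hdR : d ≤ (R₁ - R) / 2) :
    ∃ c y : E, ‖c‖ + R < R₁ ∧ ∀ x ∈ ball y (d / 2), R₁ - d ≤ ‖x‖ ∧ ‖x - c‖ ≤ R + d := by
  obtain ⟨e, he⟩ := exists_norm_eq E zero_le_one
  have hnorm {s : ℝ} (hs : 0 ≤ s) : ‖s • e‖ = s := by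
    rw [norm_smul, he, mul_one, Real.norm_of_nonneg hs]
  refine ⟨(R₁ - R - d) • e, (R₁ - d / 2) • e, by rw [hnorm] <;> linarith, fun x hx => ?_⟩
  rw [mem_ball_iff_norm] at hx
  constructor
  · have hy : ‖(R₁ - d / 2) • e‖ = R₁ - d / 2 := hnorm (by linarith)
    have htri := norm_sub_rev x _ ▸ norm_sub_norm_le ((R₁ - d / 2) • e) x
    linarith
  · have hyc : (R₁ - d / 2) • e - (R₁ - R - d) • e = (R + d / 2) • e := by
      rw [← sub_smul]
      ring_nf
    have htri := norm_sub_le_norm_sub_add_norm_sub x ((R₁ - d / 2) • e) ((R₁ - R - d) • e)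
    rw [hyc, hnorm (by linarith)] at htri
    linarith

lemma exists_gt_subset_sdiff_closedBall {K : Set E} {c : E} (hK : IsCompact K)
    (hc : ‖c‖ + R < R₁) (hs : K ⊆ ball 0 R₁ \ closedBall c R) :
    ∃ R', R < R' ∧ ‖c‖ + R' < R₁ ∧ K ⊆ ball 0 R₁ \ closedBall c R' := by
  have hfar : ∀ᶠ R' in 𝓝 R, ∀ x ∈ K, R' < ‖x - c‖ := by
    refine hK.eventually_forall_of_forall_eventually fun x hx => ?_
    have hRx : R < ‖x - c‖ := not_le.1 fun h => (hs hx).2 (mem_closedBall_iff_norm.2 h)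
    exact (by fun_prop : Continuous fun z : ℝ × E => ‖z.2 - c‖ - z.1).tendsto (R, x)
      |>.eventually_const_lt (sub_pos.2 hRx) |>.mono fun _ => sub_pos.1
  obtain ⟨R', ⟨hR'K, hR'⟩, hRR'⟩ := ((hfar.and (gt_mem_nhds (lt_sub_iff_add_lt'.2 hc))).filter_mono
    nhdsWithin_le_nhds).and (self_mem_nhdsWithin (s := Ioi R)) |>.exists
  exact ⟨R', hRR', lt_sub_iff_add_lt'.1 hR', fun x hx =>
    ⟨(hs hx).1, fun h => (hR'K x hx).not_ge (mem_closedBall_iff_norm.1 h)⟩⟩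

end Room

section Gain

variable {E : Type*} [NormedAddCommGroup E] [NormedSpace ℝ E] [FiniteDimensional ℝ E] [Nontrivial E]
  [MeasurableSpace E] [BorelSpace E] {p R R₁ : ℝ}

lemma exists_forall_lpMass_add_le (μ : Measure E) [μ.IsAddHaarMeasure] (hp : 1 < p) (hR : 0 < R)
    (hRR : R < R₁) (A : ℝ) :
    ∃ (c : E) (gain : ℝ), ‖c‖ + R < R₁ ∧ 0 < gain ∧ ∀ f t, IsAnnularProfile R R₁ f t →
      lpMass p μ (fun x => deriv f ‖x‖) ≤ A →
      lpMass p μ (fun x => f ‖x‖) + gain ≤ lpMass p μ (eccentricCompetitor f t c) := by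
  have hp0 := zero_lt_one.trans hp
  obtain ⟨d, hd, hdR, hsmall⟩ := IsAnnularProfile.exists_forall_abs_le_half μ hp hR hRR A
  obtain ⟨c, y, hc, hball⟩ := exists_center_forall_mem_ball (E := E) hR.le hd hdR
  refine ⟨c, (1 - (1 / 2) ^ p) * μ.real (ball y (d / 2)), hc, mul_pos
    (sub_pos.2 (Real.rpow_lt_one (by norm_num) (by norm_num) hp0))
    (measureReal_ball_pos y (half_pos hd)), fun f t hf hA => ?_⟩
  exact hf.lpMass_add_le_lpMass_eccentricCompetitor hp0 measurableSet_ball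
    measure_ball_lt_top.ne fun x hx =>
      ⟨hsmall f t hf hA _ (.inr ((hball x hx).1.trans (le_max_left _ _))),
        hsmall f t hf hA _ (.inl ((min_le_left _ _).trans (hball x hx).2))⟩

end Gain

section EccentricAnnulus

variable {N : ℕ} [NeZero N] {p R R₁ : ℝ}

lemma exists_lipschitzWith_dirichletEnergy_lt (hp : 1 < p) (hR : 0 < R) (hRR : R < R₁) :
    ∃ (c : EuclideanSpace ℝ (Fin N)) (C : NNReal) (v : EuclideanSpace ℝ (Fin N) → ℝ),
      ‖c‖ + R < R₁ ∧ LipschitzWith C v ∧ HasCompactSupport v ∧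
      tsupport v ⊆ ball 0 R₁ \ closedBall c R ∧
      dirichletEnergy p volume v <
        lam1 p (ball (0 : EuclideanSpace ℝ (Fin N)) R₁ \ closedBall 0 R) * lpMass p volume v := by
  have hp0 := zero_lt_one.trans hp
  set lam := lam1 p (ball (0 : EuclideanSpace ℝ (Fin N)) R₁ \ closedBall 0 R)
  have hlam : 0 < lam := lam1_annulus_pos hp.le hR hRR
  set V := volume.real (ball (0 : EuclideanSpace ℝ (Fin N)) R₁)
  have hV : 0 < V := measureReal_ball_pos 0 (hR.trans hRR)
  obtain ⟨c, gain, hc, hgain, hmass⟩ := exists_forall_lpMass_add_le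
    (volume : Measure (EuclideanSpace ℝ (Fin N))) hp hR hRR ((lam + 1) * V)
  set ε := min 1 (lam * gain / V)
  have hε : 0 < ε := lt_min one_pos (by positivity)
  obtain ⟨f, t, hf, hft⟩ :=
    exists_isAnnularProfile_of_lam1_lt hp0 hR hRR (lt_add_of_pos_right lam hε)
  have hmassV := hf.lpMass_le (μ := (volume : Measure (EuclideanSpace ℝ (Fin N)))) hp0
  have hA : lpMass p volume (fun x : EuclideanSpace ℝ (Fin N) => deriv f ‖x‖) ≤ (lam + 1) * V :=
    hft.le.trans
      (mul_le_mul (by gcongr; exact min_le_left _ _) hmassV lpMass_nonneg (by positivity))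
  obtain ⟨C, hC⟩ := hf.contDiff.lipschitzWith_of_hasCompactSupport hf.hasCompactSupport one_ne_zero
  refine ⟨c, C, eccentricCompetitor f t c, hc, lipschitzWith_eccentricCompetitor hC t c,
    hasCompactSupport_eccentricCompetitor hf.tsupport_subset,
    tsupport_eccentricCompetitor_subset hf.tsupport_subset, ?_⟩
  calc dirichletEnergy p volume (eccentricCompetitor f t c)
    _ ≤ lpMass p volume fun x : EuclideanSpace ℝ (Fin N) => deriv f ‖x‖ :=
      dirichletEnergy_eccentricCompetitor_le hp0 hf.contDiff hf.hasCompactSupport hf.deriv_peak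
    _ < (lam + ε) * lpMass p volume fun x : EuclideanSpace ℝ (Fin N) => f ‖x‖ := hft
    _ ≤ lam * (lpMass p volume fun x : EuclideanSpace ℝ (Fin N) => f ‖x‖) + lam * gain / V * V := by
      rw [add_mul]
      exact add_le_add le_rfl
        (mul_le_mul (min_le_right _ _) hmassV lpMass_nonneg (by positivity))
    _ = lam * ((lpMass p volume fun x : EuclideanSpace ℝ (Fin N) => f ‖x‖) + gain) := by
      field_simp
    _ ≤ lam * lpMass p volume (eccentricCompetitor f t c) := by
      gcongr
      exact hmass f t hf hA

lemma exists_lam1_sdiff_closedBall_lt (hp : 1 < p) (hR : 0 < R) (hRR : R < R₁) :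
    ∃ (c : EuclideanSpace ℝ (Fin N)) (R' : ℝ), R < R' ∧ ‖c‖ + R' < R₁ ∧
      (ball 0 R₁ \ closedBall c R').Nonempty ∧ lam1 p (ball 0 R₁ \ closedBall c R') <
        lam1 p (ball (0 : EuclideanSpace ℝ (Fin N)) R₁ \ closedBall 0 R) := by
  obtain ⟨c, C, v, hc, hv, hvc, hvs, hlt⟩ :=
    exists_lipschitzWith_dirichletEnergy_lt (N := N) hp hR hRR
  obtain ⟨R', hR', hcR', hvs'⟩ := exists_gt_subset_sdiff_closedBall hvc.isCompact hc hvs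
  refine ⟨c, R', hR', hcR', ?_, ?_⟩
  · obtain ⟨x, hx⟩ : (tsupport v).Nonempty := by
      by_contra! hempty
      rw [tsupport_eq_empty_iff] at hempty
      simp [hempty, lpMass, Real.zero_rpow (zero_lt_one.trans hp).ne', dirichletEnergy] at hlt
    exact ⟨x, hvs' hx⟩
  · exact lam1_lt_of_dirichletEnergy_lt (lam1_mul_lpMass_le_of_lipschitzWith (zero_lt_one.trans hp)
      (isOpen_ball.sdiff isClosed_closedBall) hv hvc hvs') hlt

end EccentricAnnulus

theorem stmt7_general (N : ℕ) (hN : N ≠ 0) (p : ℝ) (hp : 1 < p)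
    (R R₁ : ℝ) (hR : 0 < R) (hRR : R < R₁) :
    ∃ Ω₁ Ω₂ : Set (EuclideanSpace ℝ (Fin N)),
      IsOpen Ω₁ ∧ IsOpen Ω₂ ∧ Ω₁.Nonempty ∧ Ω₂.Nonempty ∧ Disjoint Ω₁ Ω₂ ∧
      Ω₁ ⊆ ball 0 R₁ ∧ Ω₂ ⊆ ball 0 R₁ ∧
      lam1 p Ω₁ < lam1 p (ball (0 : EuclideanSpace ℝ (Fin N)) R) ∧
      lam1 p Ω₂ < lam1 p (ball (0 : EuclideanSpace ℝ (Fin N)) R₁ \ closure (ball 0 R)) := by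
  have : NeZero N := ⟨hN⟩
  obtain ⟨c, R', hRR', hcR', hne, hlt⟩ := exists_lam1_sdiff_closedBall_lt (N := N) hp hR hRR
  refine ⟨ball c R', ball 0 R₁ \ closedBall c R', isOpen_ball,
    isOpen_ball.sdiff isClosed_closedBall, ⟨c, mem_ball_self (hR.trans hRR')⟩, hne,
    disjoint_sdiff_right.mono_left ball_subset_closedBall,
    ball_subset_ball' (by rw [dist_zero_right]; linarith), sdiff_subset,
    lam1_ball_lt hp.le hR hRR' c, ?_⟩
  rwa [closure_ball _ hR.ne']

theorem stmt7 (N : ℕ) (hN : 2 ≤ N) (p : ℝ) (hp : 1 < p)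
    (R R₁ : ℝ) (hR : 0 < R) (hRR : R < R₁) :
    ∃ Ω₁ Ω₂ : Set (EuclideanSpace ℝ (Fin N)),
      IsOpen Ω₁ ∧ IsOpen Ω₂ ∧ Ω₁.Nonempty ∧ Ω₂.Nonempty ∧ Disjoint Ω₁ Ω₂ ∧
      Ω₁ ⊆ ball 0 R₁ ∧ Ω₂ ⊆ ball 0 R₁ ∧
      lam1 p Ω₁ < lam1 p (ball (0 : EuclideanSpace ℝ (Fin N)) R) ∧
      lam1 p Ω₂ < lam1 p (ball (0 : EuclideanSpace ℝ (Fin N)) R₁ \ closure (ball 0 R)) :=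
  stmt7_general N (by omega) p hp R R₁ hR hRR
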